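/- arXiv:2507.10746 — 3 statements merged into one kernel-verified Lean document; each statement's English description precedes it below -/
import Mathlib

section
/- Let s ~ P_{n,θ*} with θ* ∈ Θ ⊆ ℝ^q and let Θ₀ ⊆ Θ. Suppose that for every θ* ∈ Θ₀ there is a random variable T_{θ*} with continuous CDF such that (τ̂(s) − τ(θ*))/σ̂(s) converges in distribution to T_{θ*}, and that the parametric-bootstrap estimator τ̂(s_b) with s_b ~ P_{n,θ̂(s)} given s is consistent. Let ξ̂_α(s) be the upper α-quantile of the conditional law of |(τ̂(s_b) − τ(θ̂(s)))/σ̂(s_b)| given s. Then the sequence of tests that rejects H₀ : θ* ∈ Θ₀ when the statistic T_n(s) := inf_{θ ∈ Θ₀} |(τ̂(s) − τ(θ))/σ̂(s)| exceeds ξ̂_α(s) is asymptotically of level α, i.e., limsup_{n→∞} P_{n,θ*}(T_n(s) > ξ̂_α(s)) ≤ α for all θ* ∈ Θ₀. -/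
open MeasureTheory Filter Topology

/-- The conditional bootstrap CDF: given the observed statistic `x`, the CDF (at `t`) of
`(τ̂(s_b) − τ(θ̂(x)))/σ̂(s_b)` where `s_b ~ P_{n, θ̂(x)}` conditionally on `s = x`. -/
noncomputable def bootCDF {p q : ℕ} (P : ℕ → (Fin q → ℝ) → Measure (Fin p → ℝ))
    (τ : (Fin q → ℝ) → ℝ) (τhat σhat : ℕ → (Fin p → ℝ) → ℝ)
    (θhat : ℕ → (Fin p → ℝ) → (Fin q → ℝ)) (n : ℕ) (x : Fin p → ℝ) (t : ℝ) : ℝ :=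
  ((P n (θhat n x)) {y | (τhat n y - τ (θhat n x)) / σhat n y ≤ t}).toReal

/-- The sampling CDF (at `t`) of `(τ̂(s) − τ(θ*))/σ̂(s)` when `s ~ P_{n,θ*}`. -/
noncomputable def sampCDF {p q : ℕ} (P : ℕ → (Fin q → ℝ) → Measure (Fin p → ℝ))
    (τ : (Fin q → ℝ) → ℝ) (τhat σhat : ℕ → (Fin p → ℝ) → ℝ)
    (θs : Fin q → ℝ) (n : ℕ) (t : ℝ) : ℝ :=
  ((P n θs) {x | (τhat n x - τ θs) / σhat n x ≤ t}).toReal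

/-- Consistency of the parametric-bootstrap estimator relative to the
Kolmogorov–Smirnov distance. -/
def PBConsistent {p q : ℕ} (P : ℕ → (Fin q → ℝ) → Measure (Fin p → ℝ))
    (τ : (Fin q → ℝ) → ℝ) (τhat σhat : ℕ → (Fin p → ℝ) → ℝ)
    (θhat : ℕ → (Fin p → ℝ) → (Fin q → ℝ)) (θs : Fin q → ℝ) : Prop :=
  ∀ ε > (0 : ℝ),
    Tendsto (fun n => ((P n θs) {x | ∃ t : ℝ,
        ε ≤ |bootCDF P τ τhat σhat θhat n x t - sampCDF P τ τhat σhat θs n t|}).toReal)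
      atTop (𝓝 0)

/-- The upper `α`-quantile `ξ̂_α(x)` of the conditional bootstrap law of
`|(τ̂(s_b) − τ(θ̂(x)))/σ̂(s_b)|` given `s = x`. -/
noncomputable def bootAbsUpperQuantile {p q : ℕ}
    (P : ℕ → (Fin q → ℝ) → Measure (Fin p → ℝ))
    (τ : (Fin q → ℝ) → ℝ) (τhat σhat : ℕ → (Fin p → ℝ) → ℝ)
    (θhat : ℕ → (Fin p → ℝ) → (Fin q → ℝ)) (n : ℕ) (x : Fin p → ℝ) (α : ℝ) : ℝ :=
  sInf {t : ℝ | 1 - α ≤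
    ((P n (θhat n x)) {y | |(τhat n y - τ (θhat n x)) / σhat n y| ≤ t}).toReal}

/-- The test statistic `T_n(x) := inf_{θ ∈ Θ₀} |(τ̂(x) − τ(θ))/σ̂(x)|`. -/
noncomputable def testStat {p q : ℕ} (Θ₀ : Set (Fin q → ℝ))
    (τ : (Fin q → ℝ) → ℝ) (τhat σhat : ℕ → (Fin p → ℝ) → ℝ)
    (n : ℕ) (x : Fin p → ℝ) : ℝ :=
  sInf {v : ℝ | ∃ θ ∈ Θ₀, v = |(τhat n x - τ θ) / σhat n x|}

/-!
Under `θ* ∈ Θ₀` the infimum defining `T_n` includes the term `θ = θ*`, so `T_n ≤ |R_n|` with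
`R_n = (τ̂ - τ(θ*))/σ̂`. For `β > α`, continuity of the limit CDF `F` provides a `c ≥ 0` with
`F c - F (-c) = 1 - β < 1 - α`. Whenever the bootstrap CDF is uniformly close to the sampling CDF,
the bootstrap law gives `(-c, c]` mass less than `1 - α`, so the bootstrap quantile is at least `c`
and rejection entails `|R_n| > c`. That event has limiting probability at most `β`; finally let
`β` decrease to `α`.
-/

section UpperQuantile

open ProbabilityTheory

/-- The upper `α`-quantile of a probability measure on `ℝ`, i.e. the smallest `t` at which its CDF
reaches `1 - α`. For `α ≤ 0` the set below may be empty and for `1 ≤ α` it is unbounded below;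
the infimum is then the junk value `0`. -/
noncomputable def upperQuantile (μ : Measure ℝ) (α : ℝ) : ℝ :=
  sInf {t | 1 - α ≤ cdf μ t}

lemma le_upperQuantile {μ : Measure ℝ} {α c : ℝ} (hα : 0 < α) (h : ∀ t < c, cdf μ t < 1 - α) :
    c ≤ upperQuantile μ α := by
  have hne : {t | 1 - α ≤ cdf μ t}.Nonempty :=
    ((tendsto_cdf_atTop μ).eventually_const_le (sub_lt_self 1 hα)).exists
  exact le_csInf hne fun t ht => not_lt.1 fun htc => (h t htc).not_ge ht

lemma measureReal_Ioc_eq_cdf_sub (μ : Measure ℝ) [IsProbabilityMeasure μ] {a b : ℝ}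
    (hab : a ≤ b) : μ.real (Set.Ioc a b) = cdf μ b - cdf μ a := by
  have h := (cdf μ).measure_Ioc a b
  rw [measure_cdf] at h
  rw [measureReal_def, h, ENNReal.toReal_ofReal (sub_nonneg.2 (monotone_cdf μ hab))]

lemma cdf_map {Ω : Type*} [MeasurableSpace Ω] {μ : Measure Ω} [IsProbabilityMeasure μ]
    {Y : Ω → ℝ} (hY : AEMeasurable Y μ) (t : ℝ) :
    cdf (μ.map Y) t = μ.real {x | Y x ≤ t} := by
  have := Measure.isProbabilityMeasure_map hY
  rw [cdf_eq_real, map_measureReal_apply_of_aemeasurable hY measurableSet_Iic]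
  rfl

lemma cdf_map_abs_le (μ : Measure ℝ) [IsProbabilityMeasure μ] {c t : ℝ} (hc : 0 ≤ c)
    (htc : t < c) : cdf (μ.map abs) t ≤ cdf μ c - cdf μ (-c) := by
  rw [cdf_map (by fun_prop), ← measureReal_Ioc_eq_cdf_sub μ (neg_le_self hc)]
  refine measureReal_mono fun y (hy : |y| ≤ t) => ?_
  exact ⟨(abs_lt.1 (hy.trans_lt htc)).1, (abs_le.1 (hy.trans htc.le)).2⟩

lemma le_upperQuantile_map_abs {μ : Measure ℝ} [IsProbabilityMeasure μ] {α c : ℝ} (hα : 0 < α)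
    (hc : 0 ≤ c) (h : cdf μ c - cdf μ (-c) < 1 - α) : c ≤ upperQuantile (μ.map abs) α :=
  le_upperQuantile hα fun _ htc => (cdf_map_abs_le μ hc htc).trans_lt h

lemma measureReal_lt_abs_le {Ω : Type*} [MeasurableSpace Ω] {μ : Measure Ω}
    [IsProbabilityMeasure μ] {Y : Ω → ℝ} (hY : AEMeasurable Y μ) {c : ℝ} (hc : 0 ≤ c) :
    μ.real {x | c < |Y x|} ≤ 1 - (cdf (μ.map Y) c - cdf (μ.map Y) (-c)) := by
  have := Measure.isProbabilityMeasure_map hY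
  rw [← measureReal_Ioc_eq_cdf_sub _ (neg_le_self hc),
    ← probReal_compl_eq_one_sub measurableSet_Ioc,
    map_measureReal_apply_of_aemeasurable hY measurableSet_Ioc.compl]
  exact measureReal_mono fun x (hx : c < |Y x|) hmem =>
    hx.not_ge (abs_le.2 ⟨hmem.1.le, hmem.2⟩)

end UpperQuantile

lemma exists_nonneg_sub_neg_eq {F : ℝ → ℝ} (hF : Continuous F) (hbot : Tendsto F atBot (𝓝 0))
    (htop : Tendsto F atTop (𝓝 1)) {p : ℝ} (hp : p ∈ Set.Ico 0 1) :
    ∃ c, 0 ≤ c ∧ F c - F (-c) = p := by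
  have hcont : Continuous fun t => F t - F (-t) := by fun_prop
  have hlim : Tendsto (fun t => F t - F (-t)) atTop (𝓝 1) := by
    simpa only [sub_zero, Function.comp_apply] using htop.sub (hbot.comp tendsto_neg_atTop_atBot)
  refine isPreconnected_Ici.intermediate_value_Ico (Set.self_mem_Ici (a := (0 : ℝ)))
    (le_principal_iff.2 (Ici_mem_atTop 0)) hcont.continuousOn hlim ?_
  simpa only [neg_zero, sub_self] using hp

section BootstrapTest

open ProbabilityTheory

lemma measureReal_upperQuantile_lt_le {Ω : Type*} [MeasurableSpace Ω] {μ : Measure Ω}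
    [IsProbabilityMeasure μ] {ν : Ω → Measure ℝ} [∀ x, IsProbabilityMeasure (ν x)]
    {Y S : Ω → ℝ} (hY : AEMeasurable Y μ) (hS : ∀ x, S x ≤ |Y x|) {α ε c : ℝ} (hα : 0 < α)
    (hc : 0 ≤ c) (h : cdf (μ.map Y) c - cdf (μ.map Y) (-c) + 2 * ε < 1 - α) :
    μ.real {x | upperQuantile ((ν x).map abs) α < S x} ≤
      μ.real {x | ∃ t, ε ≤ |cdf (ν x) t - cdf (μ.map Y) t|} +
        (1 - (cdf (μ.map Y) c - cdf (μ.map Y) (-c))) := by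
  set far := {x | ∃ t, ε ≤ |cdf (ν x) t - cdf (μ.map Y) t|} with hfar
  have hsub : {x | upperQuantile ((ν x).map abs) α < S x} ⊆ far ∪ {x | c < |Y x|} := by
    intro x (hx : _ < S x)
    refine or_iff_not_imp_left.2 fun hclose => ?_
    simp only [hfar, Set.mem_ofPred_eq, not_exists, not_le] at hclose
    have hmass : cdf (ν x) c - cdf (ν x) (-c) < 1 - α := by
      linarith [(abs_lt.1 (hclose c)).2, (abs_lt.1 (hclose (-c))).1]
    calc c ≤ upperQuantile ((ν x).map abs) α := le_upperQuantile_map_abs hα hc hmass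
      _ < S x := hx
      _ ≤ |Y x| := hS x
  calc μ.real {x | upperQuantile ((ν x).map abs) α < S x}
      ≤ μ.real (far ∪ {x | c < |Y x|}) := measureReal_mono hsub
    _ ≤ μ.real far + μ.real {x | c < |Y x|} := measureReal_union_le _ _
    _ ≤ _ := by gcongr; exact measureReal_lt_abs_le hY hc

/-- Here `Y i` is the studentized root at the true parameter, `S i` the test statistic, and `ν i x`
the bootstrap law of the root given the data `x`, which need not come from a parametric model. -/
theorem pb_hypothesis_tests_asymptotic_level_general {ι : Type*} {l : Filter ι} [l.NeBot]
    {Ω : ι → Type*} [∀ i, MeasurableSpace (Ω i)] {μ : ∀ i, Measure (Ω i)}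
    [∀ i, IsProbabilityMeasure (μ i)] {ν : ∀ i, Ω i → Measure ℝ}
    [∀ i x, IsProbabilityMeasure (ν i x)] {Y S : ∀ i, Ω i → ℝ}
    (hY : ∀ i, AEMeasurable (Y i) (μ i)) (hS : ∀ i x, S i x ≤ |Y i x|)
    {F : ℝ → ℝ} (hF : Continuous F) (hbot : Tendsto F atBot (𝓝 0)) (htop : Tendsto F atTop (𝓝 1))
    (hconv : ∀ t, Tendsto (fun i => cdf ((μ i).map (Y i)) t) l (𝓝 (F t)))
    (hcons : ∀ ε > 0, Tendsto (fun i =>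
      (μ i).real {x | ∃ t, ε ≤ |cdf (ν i x) t - cdf ((μ i).map (Y i)) t|}) l (𝓝 0))
    {α : ℝ} (hα0 : 0 < α) (hα1 : α < 1) :
    limsup (fun i => (μ i).real {x | upperQuantile ((ν i x).map abs) α < S i x}) l ≤ α := by
  refine le_of_not_gt fun hlt => ?_
  obtain ⟨β, hαβ, hβ⟩ := exists_between (lt_min hlt hα1)
  obtain ⟨hβ_lt, hβ1⟩ := lt_min_iff.1 hβ
  refine hβ_lt.not_ge ?_
  obtain ⟨c, hc, hFc⟩ := exists_nonneg_sub_neg_eq hF hbot htop (p := 1 - β)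
    ⟨by linarith, by linarith⟩
  obtain ⟨ε, hε, hεβ⟩ : ∃ ε > 0, 1 - β + 2 * ε < 1 - α :=
    ⟨(β - α) / 4, by linarith, by linarith⟩
  have hmass := (hconv c).sub (hconv (-c))
  rw [hFc] at hmass
  have hbound := (hcons ε hε).add (hmass.const_sub 1)
  rw [zero_add, sub_sub_cancel] at hbound
  rw [← hbound.limsup_eq]
  refine limsup_le_limsup ?_ (isCoboundedUnder_le_of_le l fun _ => measureReal_nonneg)
    hbound.isBoundedUnder_le
  filter_upwards [(hmass.add_const (2 * ε)).eventually_lt_const hεβ] with i hi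
  exact measureReal_upperQuantile_lt_le (hY i) (hS i) hα0 hc hi

end BootstrapTest

/-- The law of the studentized root `(τ̂(s) - τ(θ))/σ̂(s)` when `s ~ P_θ`. The parametric-bootstrap
law given `s = x` is the case `θ = θ̂(x)`. -/
noncomputable def rootLaw {Ω Θ : Type*} [MeasurableSpace Ω] (P : Θ → Measure Ω) (τ : Θ → ℝ)
    (τhat σhat : Ω → ℝ) (θ : Θ) : Measure ℝ :=
  (P θ).map fun x => (τhat x - τ θ) / σhat x

lemma isProbabilityMeasure_rootLaw {Ω Θ : Type*} [MeasurableSpace Ω] {P : Θ → Measure Ω}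
    {τhat σhat : Ω → ℝ} (hτhat : Measurable τhat) (hσhat : Measurable σhat) (τ : Θ → ℝ) (θ : Θ)
    [IsProbabilityMeasure (P θ)] : IsProbabilityMeasure (rootLaw P τ τhat σhat θ) :=
  Measure.isProbabilityMeasure_map (by fun_prop)

section ParametricBootstrap

open ProbabilityTheory

variable {p q : ℕ} {P : ℕ → (Fin q → ℝ) → Measure (Fin p → ℝ)} {τ : (Fin q → ℝ) → ℝ}
  {τhat σhat : ℕ → (Fin p → ℝ) → ℝ} {θhat : ℕ → (Fin p → ℝ) → (Fin q → ℝ)} {n : ℕ}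

lemma sampCDF_eq_cdf_rootLaw (hτhat : Measurable (τhat n)) (hσhat : Measurable (σhat n))
    (θ : Fin q → ℝ) [IsProbabilityMeasure (P n θ)] (t : ℝ) :
    sampCDF P τ τhat σhat θ n t = cdf (rootLaw (P n) τ (τhat n) (σhat n) θ) t :=
  (cdf_map (by fun_prop) t).symm

lemma bootCDF_eq_cdf_rootLaw (hτhat : Measurable (τhat n)) (hσhat : Measurable (σhat n))
    (x : Fin p → ℝ) [IsProbabilityMeasure (P n (θhat n x))] (t : ℝ) :
    bootCDF P τ τhat σhat θhat n x t = cdf (rootLaw (P n) τ (τhat n) (σhat n) (θhat n x)) t :=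
  sampCDF_eq_cdf_rootLaw hτhat hσhat (θhat n x) t

lemma bootAbsUpperQuantile_eq_upperQuantile (hτhat : Measurable (τhat n))
    (hσhat : Measurable (σhat n)) (x : Fin p → ℝ) [IsProbabilityMeasure (P n (θhat n x))]
    (α : ℝ) :
    bootAbsUpperQuantile P τ τhat σhat θhat n x α =
      upperQuantile ((rootLaw (P n) τ (τhat n) (σhat n) (θhat n x)).map abs) α := by
  have hroot : Measurable fun y => (τhat n y - τ (θhat n x)) / σhat n y := by fun_prop
  rw [upperQuantile, rootLaw, Measure.map_map measurable_abs hroot]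
  simp only [cdf_map (measurable_abs.comp hroot).aemeasurable]
  rfl

end ParametricBootstrap

lemma testStat_le {p q : ℕ} {Θ₀ : Set (Fin q → ℝ)} {θ : Fin q → ℝ} (hθ : θ ∈ Θ₀)
    (τ : (Fin q → ℝ) → ℝ) (τhat σhat : ℕ → (Fin p → ℝ) → ℝ) (n : ℕ) (x : Fin p → ℝ) :
    testStat Θ₀ τ τhat σhat n x ≤ |(τhat n x - τ θ) / σhat n x| :=
  csInf_le ⟨0, by rintro _ ⟨_, _, rfl⟩; exact abs_nonneg _⟩ ⟨θ, hθ, rfl⟩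

/-- **Asymptotic level of parametric-bootstrap hypothesis tests.**
Suppose that for every `θ* ∈ Θ₀` the ratio `(τ̂(s) − τ(θ*))/σ̂(s)` converges in
distribution to a random variable with continuous CDF, and that the parametric-bootstrap
estimator is consistent.  Then the sequence of tests rejecting `H₀ : θ* ∈ Θ₀` when
`T_n(s) := inf_{θ ∈ Θ₀} |(τ̂(s) − τ(θ))/σ̂(s)|` exceeds the bootstrap quantile
`ξ̂_α(s)` is asymptotically of level `α`:
`limsup_n P_{n,θ*}(T_n(s) > ξ̂_α(s)) ≤ α` for all `θ* ∈ Θ₀`. -/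
theorem pb_hypothesis_tests_asymptotic_level {p q : ℕ}
    (Θ Θ₀ : Set (Fin q → ℝ)) (hΘ₀ : Θ₀ ⊆ Θ)
    (P : ℕ → (Fin q → ℝ) → Measure (Fin p → ℝ))
    (hP : ∀ n θ, IsProbabilityMeasure (P n θ))
    (τ : (Fin q → ℝ) → ℝ)
    (τhat σhat : ℕ → (Fin p → ℝ) → ℝ)
    (θhat : ℕ → (Fin p → ℝ) → (Fin q → ℝ))
    (hτhat : ∀ n, Measurable (τhat n)) (hσhat : ∀ n, Measurable (σhat n))
    (hθhat : ∀ n, Measurable (θhat n))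
    (hconv : ∀ θs ∈ Θ₀, ∃ F : ℝ → ℝ, Continuous F ∧ Monotone F ∧
      Tendsto F atBot (𝓝 0) ∧ Tendsto F atTop (𝓝 1) ∧
      ∀ t, Tendsto (fun n => sampCDF P τ τhat σhat θs n t) atTop (𝓝 (F t)))
    (hPB : ∀ θs ∈ Θ₀, PBConsistent P τ τhat σhat θhat θs)
    (α : ℝ) (hα0 : 0 < α) (hα1 : α < 1) :
    ∀ θs ∈ Θ₀,
      Filter.limsup (fun n =>
        ((P n θs) {x | bootAbsUpperQuantile P τ τhat σhat θhat n x α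
            < testStat Θ₀ τ τhat σhat n x}).toReal) atTop ≤ α := by
  intro θs hθs
  obtain ⟨F, hF, -, hbot, htop, hlim⟩ := hconv θs hθs
  have hcons := hPB θs hθs
  have hroot n θ := isProbabilityMeasure_rootLaw (P := P n) (hτhat n) (hσhat n) τ θ
  simp only [PBConsistent, sampCDF_eq_cdf_rootLaw (hτhat _) (hσhat _),
    bootCDF_eq_cdf_rootLaw (hτhat _) (hσhat _)] at hlim hcons
  simp only [bootAbsUpperQuantile_eq_upperQuantile (hτhat _) (hσhat _)]
  exact pb_hypothesis_tests_asymptotic_level_general (fun n => by fun_prop)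
    (testStat_le hθs τ τhat σhat) hF hbot htop hlim hcons hα0 hα1
end

section
/- Let g : 𝒟 → ℝ^d have ℓ₁-sensitivity Δ₁(g) := sup_{d(D,D')≤1} ‖g(D) − g(D')‖₁ < ∞, and let the Laplace mechanism release M(D) := g(D) + (ξ₁, …, ξ_d) where ξ_i are i.i.d. with density p(x) = (1/(2b))·exp(−|x|/b). If b = Δ₁(g)/ε, then M satisfies ε-differential privacy: for all datasets D, D' with Hamming distance at most 1 and all measurable S ⊆ ℝ^d, P(M(D) ∈ S) ≤ exp(ε)·P(M(D') ∈ S). -/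
open MeasureTheory

/-- The law of the Laplace mechanism `M(D) = g(D) + (ξ₁, …, ξ_d)`, `ξ_i` i.i.d. with
density `(1/(2b))·exp(−|x|/b)`: the measure on `ℝ^d` with density
`∏_{i=1}^d (1/(2b))·exp(−|y_i − g(D)_i|/b)` with respect to Lebesgue measure. -/
noncomputable def laplaceMechanism {d : ℕ} (b : ℝ) (c : Fin d → ℝ) :
    Measure (Fin d → ℝ) :=
  volume.withDensity fun y : Fin d → ℝ =>
    ENNReal.ofReal (∏ i, (1 / (2 * b)) * Real.exp (-|y i - c i| / b))

/-- The density of the Laplace distribution on `ℝ` with location `c` and scale `b`, the law of one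
coordinate of `laplaceMechanism`; its parameters are ordered as there. -/
noncomputable def laplacePDFReal (b c x : ℝ) : ℝ :=
  1 / (2 * b) * Real.exp (-|x - c| / b)

section

variable {b : ℝ}

lemma laplacePDFReal_nonneg (hb : 0 ≤ b) (c x : ℝ) : 0 ≤ laplacePDFReal b c x := by
  unfold laplacePDFReal
  positivity

lemma laplacePDFReal_le_exp_mul (hb : 0 ≤ b) (c c' x : ℝ) :
    laplacePDFReal b c x ≤ Real.exp (|c - c'| / b) * laplacePDFReal b c' x := by
  have htriangle : -|x - c| ≤ |c - c'| + -|x - c'| := by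
    linarith [abs_sub_le x c c']
  calc 1 / (2 * b) * Real.exp (-|x - c| / b)
      ≤ 1 / (2 * b) * Real.exp ((|c - c'| + -|x - c'|) / b) := by gcongr
    _ = Real.exp (|c - c'| / b) * (1 / (2 * b) * Real.exp (-|x - c'| / b)) := by
      rw [add_div, Real.exp_add, mul_left_comm]

lemma prod_laplacePDFReal_le_exp_mul {ι : Type*} (s : Finset ι) (hb : 0 ≤ b) (c c' x : ι → ℝ) :
    ∏ i ∈ s, laplacePDFReal b (c i) (x i) ≤
      Real.exp ((∑ i ∈ s, |c i - c' i|) / b) * ∏ i ∈ s, laplacePDFReal b (c' i) (x i) :=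
  calc ∏ i ∈ s, laplacePDFReal b (c i) (x i)
      ≤ ∏ i ∈ s, Real.exp (|c i - c' i| / b) * laplacePDFReal b (c' i) (x i) :=
        Finset.prod_le_prod (fun i _ => laplacePDFReal_nonneg hb (c i) (x i))
          fun i _ => laplacePDFReal_le_exp_mul hb (c i) (c' i) (x i)
    _ = Real.exp ((∑ i ∈ s, |c i - c' i|) / b) * ∏ i ∈ s, laplacePDFReal b (c' i) (x i) := by
        rw [Finset.prod_mul_distrib, ← Real.exp_sum, Finset.sum_div]

lemma laplaceMechanism_le_smul {d : ℕ} (hb : 0 ≤ b) (c c' : Fin d → ℝ) :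
    laplaceMechanism b c ≤
      ENNReal.ofReal (Real.exp ((∑ i, |c i - c' i|) / b)) • laplaceMechanism b c' := by
  unfold laplaceMechanism
  rw [← withDensity_smul' _ _ ENNReal.ofReal_ne_top]
  refine withDensity_mono (ae_of_all _ fun y => ?_)
  rw [Pi.smul_apply, smul_eq_mul, ← ENNReal.ofReal_mul (Real.exp_nonneg _)]
  exact ENNReal.ofReal_le_ofReal (prod_laplacePDFReal_le_exp_mul Finset.univ hb c c' y)

end

theorem laplace_mechanism_is_DP_general {𝒟 : Type*} {d : ℕ} (Adj : 𝒟 → 𝒟 → Prop)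
    (g : 𝒟 → Fin d → ℝ) {Δ₁ ε b : ℝ} (hb : 0 < b) (hε : 0 < ε)
    (hsens : ∀ D D', Adj D D' → ∑ i, |g D i - g D' i| ≤ Δ₁) (hΔb : Δ₁ / ε ≤ b)
    {D D' : 𝒟} (hD : Adj D D') (S : Set (Fin d → ℝ)) :
    laplaceMechanism b (g D) S ≤
      ENNReal.ofReal (Real.exp ε) * laplaceMechanism b (g D') S := by
  have hloss : (∑ i, |g D i - g D' i|) / b ≤ ε :=
    (div_le_iff₀' hb).mpr ((hsens D D' hD).trans ((div_le_iff₀ hε).mp hΔb))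
  calc laplaceMechanism b (g D) S
      ≤ ENNReal.ofReal (Real.exp ((∑ i, |g D i - g D' i|) / b)) * laplaceMechanism b (g D') S :=
        laplaceMechanism_le_smul hb.le (g D) (g D') S
    _ ≤ ENNReal.ofReal (Real.exp ε) * laplaceMechanism b (g D') S := by gcongr

/-- **The Laplace mechanism is `ε`-differentially private.**
Let `g : 𝒟 → ℝ^d` have ℓ₁-sensitivity bounded by `Δ₁ < ∞`
(`∑ i, |g(D)_i − g(D')_i| ≤ Δ₁` whenever `D, D'` differ in at most one entry),
and let the Laplace mechanism release `M(D) := g(D) + (ξ₁, …, ξ_d)` where the `ξ_i` are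
i.i.d. with density `p(x) = (1/(2b))·exp(−|x|/b)`.  If `b = Δ₁(g)/ε`, then `M` satisfies
`ε`-DP: for all datasets `D, D'` with Hamming distance at most `1` and all measurable
`S ⊆ ℝ^d`, `P(M(D) ∈ S) ≤ exp(ε)·P(M(D') ∈ S)`. -/
theorem laplace_mechanism_is_DP {X : Type*} [DecidableEq X] {n d : ℕ}
    (g : (Fin n → X) → (Fin d → ℝ)) (Δ₁ ε b : ℝ) (hΔ : 0 < Δ₁) (hε : 0 < ε)
    (hsens : ∀ D D' : Fin n → X, hammingDist D D' ≤ 1 → ∑ i, |g D i - g D' i| ≤ Δ₁)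
    (hb : b = Δ₁ / ε) :
    ∀ D D' : Fin n → X, hammingDist D D' ≤ 1 →
      ∀ S : Set (Fin d → ℝ), MeasurableSet S →
        laplaceMechanism b (g D) S ≤
          ENNReal.ofReal (Real.exp ε) * laplaceMechanism b (g D') S := by
  intro D D' hD S _
  exact laplace_mechanism_is_DP_general (fun D D' => hammingDist D D' ≤ 1) g
    (hb ▸ div_pos hΔ hε) hε hsens hb.ge hD S
end

section
/- Suppose g_n : ℝ^q → ℝ is a sequence of functions such that g_n(h_n) → 0 for every deterministic sequence h_n with h_n = O(1) (i.e., every bounded sequence). Then for every sequence of random vectors ĥ_n that is bounded in probability (ĥ_n = O_P(1), meaning for every δ > 0 there is M with sup_n P(‖ĥ_n‖ > M) ≤ δ), one has g_n(ĥ_n) → 0 in probability. -/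
open MeasureTheory Filter Topology

/-! Convergence along every bounded deterministic sequence is uniform convergence on bounded sets:
otherwise, choosing a violating point whenever one exists gives a bounded sequence along which
convergence fails. Up to arbitrarily small probability `ĥ_n` stays in one
bounded set, and once `g_n` is uniformly close to its limit there, `g_n(ĥ_n)` can be far from the
limit only when `ĥ_n` leaves that set. -/

section

variable {ι Ω E F : Type*} {l : Filter ι}

theorem eventually_forall_mem_of_forall_selection {s : Set E} {p : ι → E → Prop}
    (h : ∀ x : ι → E, (∀ i, x i ∈ s) → ∀ᶠ i in l, p i (x i)) :
    ∀ᶠ i in l, ∀ x ∈ s, p i x := by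
  rcases s.eq_empty_or_nonempty with rfl | hs
  · simp
  · have : Nonempty s := hs.to_subtype
    -- Drinker paradox: take a counterexample to `p i` in `s` if there is one, any point otherwise.
    have exists_test_point : ∀ i, ∃ x : s, p i x → ∀ y : s, p i y :=
      fun i ↦ forall_imp_iff_exists_imp.1 id
    choose x hx using exists_test_point
    filter_upwards [h (fun i ↦ x i) fun i ↦ (x i).2] with i hi y hy
    exact hx i hi ⟨y, hy⟩

theorem tendstoUniformlyOn_const_of_forall_tendsto [UniformSpace F] {s : Set E}
    {g : ι → E → F} {c : F}
    (hg : ∀ x : ι → E, (∀ i, x i ∈ s) → Tendsto (fun i ↦ g i (x i)) l (𝓝 c)) :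
    TendstoUniformlyOn g (fun _ ↦ c) l s := fun _ hu ↦
  eventually_forall_mem_of_forall_selection fun x hx ↦
    Uniform.tendsto_nhds_right.1 (hg x hx) hu

variable {mΩ : MeasurableSpace Ω} {μ : Measure Ω} {X : ι → Ω → E}

/-- Boundedness in measure along `l`, that is `X = O_P(1)` when `μ` is a probability measure: up to
arbitrarily small measure, `X i` eventually takes its values in a single bounded set. Along `atTop`
only the tail of a sequence matters. -/
def IsBoundedInMeasure [Bornology E] (μ : Measure Ω) (X : ι → Ω → E) (l : Filter ι) : Prop :=
  ∀ δ : ENNReal, 0 < δ →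
    ∃ s : Set E, Bornology.IsBounded s ∧ ∀ᶠ i in l, μ {ω | X i ω ∉ s} ≤ δ

theorem isBoundedInMeasure_iff_norm [SeminormedAddCommGroup E] :
    IsBoundedInMeasure μ X l ↔
      ∀ δ : ENNReal, 0 < δ → ∃ M : ℝ, ∀ᶠ i in l, μ {ω | M < ‖X i ω‖} ≤ δ := by
  refine forall₂_congr fun δ _ ↦ ⟨?_, ?_⟩
  · rintro ⟨s, hs, hsX⟩
    obtain ⟨M, hM⟩ := hs.exists_norm_le
    refine ⟨M, hsX.mono fun i hi ↦ (measure_mono fun ω hω hXs ↦ ?_).trans hi⟩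
    exact (hM _ hXs).not_gt hω
  · rintro ⟨M, hM⟩
    exact ⟨Metric.closedBall 0 M, Metric.isBounded_closedBall, by simpa using hM⟩

theorem isBoundedInMeasure_iff_measureReal_norm [SeminormedAddCommGroup E] [IsFiniteMeasure μ] :
    IsBoundedInMeasure μ X l ↔
      ∀ δ : ℝ, 0 < δ → ∃ M : ℝ, ∀ᶠ i in l, μ.real {ω | M < ‖X i ω‖} ≤ δ := by
  rw [isBoundedInMeasure_iff_norm]
  constructor
  · intro h δ hδ
    obtain ⟨M, hM⟩ := h (ENNReal.ofReal δ) (ENNReal.ofReal_pos.2 hδ)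
    exact ⟨M, hM.mono fun i hi ↦ ENNReal.toReal_le_of_le_ofReal hδ.le hi⟩
  · intro h δ hδ
    rcases eq_or_ne δ ⊤ with rfl | hδ_top
    · exact ⟨0, by simp⟩
    · obtain ⟨M, hM⟩ := h δ.toReal (ENNReal.toReal_pos hδ.ne' hδ_top)
      exact ⟨M, hM.mono fun i hi ↦ (ENNReal.toReal_le_toReal (measure_ne_top _ _) hδ_top).1 hi⟩

theorem IsBoundedInMeasure.tendstoInMeasure_of_tendstoUniformlyOn [Bornology E]
    [PseudoEMetricSpace F] {g : ι → E → F} {c : F} (hX : IsBoundedInMeasure μ X l)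
    (hg : ∀ s, Bornology.IsBounded s → TendstoUniformlyOn g (fun _ ↦ c) l s) :
    TendstoInMeasure μ (fun i ω ↦ g i (X i ω)) l (fun _ ↦ c) := by
  intro ε hε
  refine ENNReal.tendsto_nhds_zero.2 fun δ hδ ↦ ?_
  obtain ⟨s, hs, hXs⟩ := hX δ hδ
  filter_upwards [hXs, EMetric.tendstoUniformlyOn_iff.1 (hg s hs) ε hε] with i hiX hig
  have far_subset_outside : {ω | ε ≤ edist (g i (X i ω)) c} ⊆ {ω | X i ω ∉ s} :=
    fun ω hω hmem ↦ (hig _ hmem).not_ge (edist_comm c _ ▸ hω)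
  exact (measure_mono far_subset_outside).trans hiX

theorem tendsto_in_probability_of_tendsto_of_bounded_general [Bornology E]
    [PseudoEMetricSpace F] {g : ι → E → F} {c : F}
    (hg : ∀ h : ι → E, Bornology.IsBounded (Set.range h) →
      Tendsto (fun i ↦ g i (h i)) l (𝓝 c))
    (hX : IsBoundedInMeasure μ X l) :
    TendstoInMeasure μ (fun i ω ↦ g i (X i ω)) l (fun _ ↦ c) :=
  hX.tendstoInMeasure_of_tendstoUniformlyOn fun _ hs ↦
    tendstoUniformlyOn_const_of_forall_tendsto fun h hh ↦
      hg h (hs.subset (Set.range_subset_iff.2 hh))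

end

/-- **Lemma (Ferrando et al., Lemma 3).**
Suppose `g_n : ℝ^q → ℝ` is a sequence of (measurable) functions such that `g_n(h_n) → 0`
for every deterministic bounded sequence `h_n = O(1)`.  Then for every sequence of random
vectors `ĥ_n` that is bounded in probability (`ĥ_n = O_P(1)`: for every `δ > 0` there is
`M` with `sup_n P(‖ĥ_n‖ > M) ≤ δ`), one has `g_n(ĥ_n) → 0` in probability. -/
theorem tendsto_in_probability_of_tendsto_of_bounded {q : ℕ} {Ω : Type*}
    [MeasurableSpace Ω] (P : Measure Ω) [IsProbabilityMeasure P]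
    (g : ℕ → (Fin q → ℝ) → ℝ) (hg_meas : ∀ n, Measurable (g n))
    (hg : ∀ h : ℕ → (Fin q → ℝ), (∃ M : ℝ, ∀ n, ‖h n‖ ≤ M) →
      Tendsto (fun n => g n (h n)) atTop (𝓝 0))
    (hHat : ℕ → Ω → (Fin q → ℝ)) (hHat_meas : ∀ n, Measurable (hHat n))
    (hbound : ∀ δ > (0 : ℝ), ∃ M : ℝ, ∀ n, (P {ω | M < ‖hHat n ω‖}).toReal ≤ δ) :
    ∀ ε > (0 : ℝ),
      Tendsto (fun n => (P {ω | ε ≤ |g n (hHat n ω)|}).toReal) atTop (𝓝 0) := by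
  have hX : IsBoundedInMeasure P hHat atTop := isBoundedInMeasure_iff_measureReal_norm.2
    fun δ hδ ↦ (hbound δ hδ).imp fun _ hM ↦ .of_forall hM
  have hlim : TendstoInMeasure P (fun n ω ↦ g n (hHat n ω)) atTop (fun _ ↦ 0) :=
    tendsto_in_probability_of_tendsto_of_bounded_general (fun h hh ↦ hg h <| by
      simpa only [Set.forall_mem_range] using hh.exists_norm_le) hX
  simpa only [sub_zero, Real.norm_eq_abs, measureReal_def] using
    tendstoInMeasure_iff_measureReal_norm.1 hlim
end
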